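/- The languages L₁ = {w ∈ {a,b,c}* \ {ε} : |w|_c ≤ |w|_a} and L₂ = {w ∈ {a,b,c}* \ {ε} : |w|_c ≤ |w|_b} are each binary-PODWA-recognizable, but their intersection L₁ ∩ L₂ is not binary-PODWA-recognizable. Hence the class of binary-PODWA-recognizable languages is not closed under intersection. -/

import Mathlib

/-- A deterministic weighted automaton (DWA) over alphabet `A` with state space `Q`. -/
structure DWA (A : Type) (Q : Type) where
  init : Q
  δ : Q → A → Q
  c : Q → A → ℤ

/-- The extended transition function `δ̂`. -/
def DWA.run {A Q : Type} (M : DWA A Q) (q : Q) (w : List A) : Q :=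
  w.foldl M.δ q

/-- The accumulated weight of the run on `w` starting in state `q`. -/
def DWA.valFrom {A Q : Type} (M : DWA A Q) : Q → List A → ℤ
  | _, [] => 0
  | q, x :: w => M.c q x + M.valFrom (M.δ q x) w

/-- The value `A(w)` of a word: the sum of the weights along the run from the initial state. -/
def DWA.val {A Q : Type} (M : DWA A Q) (w : List A) : ℤ :=
  M.valFrom M.init w

/-- The three-letter alphabet `{a, b, c}`. -/
inductive ABC where
  | a : ABC
  | b : ABC
  | c : ABC
deriving DecidableEq

/-!
For a weight `f` on letters, the nonempty words of nonnegative total weight are recognizable: sum up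
`f` and earn a bonus of `1` on the first transition, which turns `0 ≤` into `0 <`.

If `u` and `v` act idempotently on the states, then the runs on `u³vw`, `uv³w` and `u²v²w` differ
only in how often they traverse the loop of `u` and the loop of `v`. The value of the third word is
therefore the average of the other two, and it cannot be positive unless one of them is. In a finite
automaton `aᴺ` and `bᴺ` act idempotently for some `N > 0`. For `u = aᴺ`, `v = bᴺ` and `w = c²ᴺ`,
only the third word has at least as many `a`s and at least as many `b`s as `c`s.
-/

/-- Binary-PODWA-recognizability: some finite-state DWA has positive value on exactly the nonempty
words of `L`. Membership of the empty word is ignored, so that a language of nonempty words may be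
encoded with or without it. -/
def IsBinaryPODWARecognizable {A : Type} (L : Set (List A)) : Prop :=
  ∃ (Q : Type) (_ : Fintype Q) (M : DWA A Q), ∀ w : List A, w ≠ [] → (0 < M.val w ↔ w ∈ L)

theorem exists_pos_forall_isIdempotentElem_pow (G : Type*) [Monoid G] [Finite G] :
    ∃ n : ℕ, 0 < n ∧ ∀ g : G, IsIdempotentElem (g ^ n) := by
  obtain ⟨m, k, hmk, hpow⟩ :=
    Finite.exists_ne_map_eq_of_infinite fun (n : ℕ) (g : G) => g ^ n
  wlog hlt : m < k generalizing m k
  · exact this k m hmk.symm hpow.symm (by omega)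
  obtain ⟨p, rfl⟩ := Nat.exists_eq_add_of_le hlt.le
  have hp : 0 < p := by omega
  have pow_add_mul (g : G) (i : ℕ) : g ^ (m + p * i) = g ^ m := by
    induction i with
    | zero => simp
    | succ i ih =>
      calc g ^ (m + p * (i + 1)) = g ^ (m + p) * g ^ (p * i) := by rw [← pow_add]; ring_nf
        _ = g ^ m * g ^ (p * i) := by rw [congrFun hpow g]
        _ = g ^ m := by rw [← pow_add, ih]
  have hm : m ≤ p * (m + 1) := by nlinarith
  refine ⟨p * (m + 1), by positivity, fun g => ?_⟩
  obtain ⟨r, hr⟩ := Nat.exists_eq_add_of_le hm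
  calc g ^ (p * (m + 1)) * g ^ (p * (m + 1))
      = g ^ (m + p * (m + 1)) * g ^ r := by rw [← pow_add, ← pow_add]; congr 1; omega
    _ = g ^ (p * (m + 1)) := by rw [pow_add_mul, ← pow_add, hr]

namespace DWA

variable {A Q : Type} (M : DWA A Q)

theorem run_append (q : Q) (u v : List A) : M.run q (u ++ v) = M.run (M.run q u) v :=
  List.foldl_append

theorem valFrom_append (q : Q) (u v : List A) :
    M.valFrom q (u ++ v) = M.valFrom q u + M.valFrom (M.run q u) v := by
  induction u generalizing q with
  | nil => simp [valFrom, run]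
  | cons x u ih => simp [valFrom, run, ih, add_assoc]

theorem run_flatten_replicate (q : Q) (n : ℕ) (u : List A) :
    M.run q (List.replicate n u).flatten = (M.run · u)^[n] q := by
  induction n generalizing q with
  | zero => rfl
  | succ n ih =>
    rw [List.replicate_succ, List.flatten_cons, run_append, ih, Function.iterate_succ_apply]

/-- A word acts idempotently on the states of `M` when reading it twice leads to the same state as
reading it once, so that the state reached by reading it carries a loop labelled by the word. -/
def ActsIdempotently (u : List A) : Prop :=
  ∀ q : Q, M.run (M.run q u) u = M.run q u

theorem exists_pos_forall_actsIdempotently [Finite Q] :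
    ∃ n : ℕ, 0 < n ∧ ∀ u : List A, M.ActsIdempotently (List.replicate n u).flatten := by
  have : Finite (Function.End Q) := inferInstanceAs (Finite (Q → Q))
  obtain ⟨n, hn, idem⟩ := exists_pos_forall_isIdempotentElem_pow (Function.End Q)
  refine ⟨n, hn, fun u q => ?_⟩
  let g : Function.End Q := (M.run · u)
  have run_eq_pow (q : Q) : M.run q (List.replicate n u).flatten = (g ^ n) q :=
    (M.run_flatten_replicate q n u).trans (smul_iterate_apply g n q)
  rw [run_eq_pow, run_eq_pow]
  exact congrFun (idem g) q

variable {M} in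
theorem ActsIdempotently.valFrom_add_valFrom {u v : List A} (hu : M.ActsIdempotently u)
    (hv : M.ActsIdempotently v) (q : Q) (w : List A) :
    M.valFrom q (u ++ u ++ u ++ v ++ w) + M.valFrom q (u ++ v ++ v ++ v ++ w) =
      2 * M.valFrom q (u ++ u ++ v ++ v ++ w) := by
  simp only [valFrom_append, run_append, hu _, hv _]
  ring

/-- The automaton computing `1 + ∑ f` on nonempty words; its state records whether a letter has
already been read, hence whether the bonus `1` has been paid. -/
def onePlusSum (f : A → ℤ) : DWA A Bool where
  init := false
  δ _ _ := true
  c started x := (if started then 0 else 1) + f x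

theorem onePlusSum_valFrom_true (f : A → ℤ) (w : List A) :
    (onePlusSum f).valFrom true w = (w.map f).sum := by
  induction w with
  | nil => rfl
  | cons x w ih => simpa [valFrom, onePlusSum] using ih

theorem onePlusSum_val (f : A → ℤ) {w : List A} (hw : w ≠ []) :
    (onePlusSum f).val w = 1 + (w.map f).sum := by
  obtain ⟨x, w, rfl⟩ := List.exists_cons_of_ne_nil hw
  calc (onePlusSum f).val (x :: w) = 1 + f x + (onePlusSum f).valFrom true w := rfl
    _ = 1 + ((x :: w).map f).sum := by
      rw [onePlusSum_valFrom_true, List.map_cons, List.sum_cons, add_assoc]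

end DWA

theorem isBinaryPODWARecognizable_sum_nonneg {A : Type} (f : A → ℤ) :
    IsBinaryPODWARecognizable {w : List A | 0 ≤ (w.map f).sum} := by
  refine ⟨Bool, inferInstance, DWA.onePlusSum f, fun w hw => ?_⟩
  rw [DWA.onePlusSum_val f hw, Set.mem_ofPred_eq]
  omega

theorem sum_map_single_sub_single {A : Type} [DecidableEq A] (x y : A) (w : List A) :
    (w.map (Pi.single x 1 - Pi.single y 1 : A → ℤ)).sum = w.count x - w.count y := by
  induction w with
  | nil => simp
  | cons z w ih =>
    simp only [List.map_cons, List.sum_cons, ih, List.count_cons, Pi.sub_apply, Pi.single_apply,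
      beq_iff_eq, Nat.cast_add, Nat.cast_ite, Nat.cast_one, Nat.cast_zero]
    ring

theorem isBinaryPODWARecognizable_count_le_count {A : Type} [DecidableEq A] (x y : A) :
    IsBinaryPODWARecognizable {w : List A | w.count x ≤ w.count y} := by
  have recognizable :=
    isBinaryPODWARecognizable_sum_nonneg (Pi.single y 1 - Pi.single x 1 : A → ℤ)
  simpa only [sum_map_single_sub_single, sub_nonneg, Nat.cast_le] using recognizable

theorem IsBinaryPODWARecognizable.exists_pos_forall_mem_or_mem {A : Type} {L : Set (List A)}
    (hL : IsBinaryPODWARecognizable L) :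
    ∃ n : ℕ, 0 < n ∧ ∀ u v w : List A,
      let U := (List.replicate n u).flatten
      let V := (List.replicate n v).flatten
      U ++ U ++ V ++ V ++ w ∈ L → U ++ U ++ U ++ V ++ w ∈ L ∨ U ++ V ++ V ++ V ++ w ∈ L := by
  obtain ⟨Q, _, M, hM⟩ := hL
  obtain ⟨n, hn, idem⟩ := M.exists_pos_forall_actsIdempotently
  refine ⟨n, hn, fun u v w => ?_⟩
  intro U V hmid
  by_cases hnil : U ++ V ++ w = []
  · simp_all
  have average : M.val (U ++ U ++ U ++ V ++ w) + M.val (U ++ V ++ V ++ V ++ w) =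
      2 * M.val (U ++ U ++ V ++ V ++ w) := (idem u).valFrom_add_valFrom (idem v) M.init w
  rw [← hM _ (by simp_all)] at hmid ⊢
  rw [← hM _ (by simp_all)]
  omega

theorem not_isBinaryPODWARecognizable_count_le_count_inter {A : Type} [DecidableEq A] {a b c : A}
    (hab : a ≠ b) (hac : a ≠ c) (hbc : b ≠ c) :
    ¬ IsBinaryPODWARecognizable
      ({w : List A | w.count c ≤ w.count a} ∩ {w : List A | w.count c ≤ w.count b}) := by
  intro hL
  obtain ⟨n, hn, exchange⟩ := hL.exists_pos_forall_mem_or_mem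
  have mem_or_mem := exchange [a] [b] (List.replicate (2 * n) c)
  simp only [List.flatten_replicate_singleton, Set.mem_inter_iff, Set.mem_ofPred_eq,
    List.count_append, List.count_replicate, beq_iff_eq, hab, hac, hbc, hab.symm, hac.symm,
    hbc.symm, ↓reduceIte] at mem_or_mem
  omega

theorem binary_podwa_not_closed_under_intersection_general {A : Type} [DecidableEq A] {a b c : A}
    (hab : a ≠ b) (hac : a ≠ c) (hbc : b ≠ c) :
    IsBinaryPODWARecognizable {w : List A | w.count c ≤ w.count a} ∧
    IsBinaryPODWARecognizable {w : List A | w.count c ≤ w.count b} ∧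
    ¬ IsBinaryPODWARecognizable
      ({w : List A | w.count c ≤ w.count a} ∩ {w : List A | w.count c ≤ w.count b}) :=
  ⟨isBinaryPODWARecognizable_count_le_count c a, isBinaryPODWARecognizable_count_le_count c b,
    not_isBinaryPODWARecognizable_count_le_count_inter hab hac hbc⟩

/-- the languages `L₁ = {w ≠ ε : |w|_c ≤ |w|_a}` and
`L₂ = {w ≠ ε : |w|_c ≤ |w|_b}` are each binary-PODWA-recognizable, but their intersection is
not; hence the class of binary-PODWA-recognizable languages is not closed under
intersection. -/
theorem binary_podwa_not_closed_under_intersection :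
    (∃ (Q : Type) (_ : Fintype Q) (M : DWA ABC Q),
        ∀ w : List ABC, w ≠ [] → (0 < M.val w ↔ w.count ABC.c ≤ w.count ABC.a)) ∧
    (∃ (Q : Type) (_ : Fintype Q) (M : DWA ABC Q),
        ∀ w : List ABC, w ≠ [] → (0 < M.val w ↔ w.count ABC.c ≤ w.count ABC.b)) ∧
    ¬ ∃ (Q : Type) (_ : Fintype Q) (M : DWA ABC Q),
        ∀ w : List ABC, w ≠ [] →
          (0 < M.val w ↔
            (w.count ABC.c ≤ w.count ABC.a ∧ w.count ABC.c ≤ w.count ABC.b)) :=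
  binary_podwa_not_closed_under_intersection_general (by decide) (by decide) (by decide)
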